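/- arXiv:2509.02495 — 7 statements merged into one kernel-verified Lean document; each statement's English description precedes it below -/
import Mathlib

section
/- Let Ω be a finite nonempty set, and let < and ≤ be two binary relations on the powerset of Ω with < nonempty. Then there exists a probability measure μ on Ω such that for all A, B ⊆ Ω, A < B implies μ(A) < μ(B) and A ≤ B implies μ(A) ≤ μ(B), if and only if the following condition (GS) holds: for every n ≥ 1 and all sequences (A_i)_{i≤n}, (B_i)_{i≤n} of subsets of Ω with (A_i)_{i≤n} ≤₀ (B_i)_{i≤n}, if for every i < n either B_i ≤ A_i or B_i < A_i, then it is not the case that B_n < A_n. -/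
open Finset

variable {Ω : Type*}

/-- The measure of a finite set of states given weights `w`: `μ(A) = ∑_{ω ∈ A} w ω`. -/
noncomputable def mea (w : Ω → ℝ) (A : Finset Ω) : ℝ := ∑ ω ∈ A, w ω

/-- `w` is a probability weight function: nonnegative and summing to 1. -/
def IsProbWeight [Fintype Ω] (w : Ω → ℝ) : Prop :=
  (∀ ω, 0 ≤ w ω) ∧ (∑ ω, w ω) = 1

/-- The measure is regular: only the empty set has measure 0. -/
def RegularW (w : Ω → ℝ) : Prop := ∀ X : Finset Ω, mea w X = 0 → X = ∅

/-- Conditional measure `μ_A(X) = μ(A ∩ X) / μ(A)`. -/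
noncomputable def condMea [DecidableEq Ω] (w : Ω → ℝ) (A X : Finset Ω) : ℝ := mea w (A ∩ X) / mea w A

/-- `X` is `(m,t)`-stable for a set function `m`: `X` is nonempty and for every `E` with
`X ∩ E ≠ ∅` and `m E > 0`, `m (X ∩ E) / m E > t`. -/
def StableFor [DecidableEq Ω] (m : Finset Ω → ℝ) (t : ℝ) (X : Finset Ω) : Prop :=
  X.Nonempty ∧ ∀ E : Finset Ω, (X ∩ E).Nonempty → 0 < m E → t < m (X ∩ E) / m E

/-- `S` is the `⊆`-least `(m,t)`-stable set. -/
def IsLeastStable [DecidableEq Ω] (m : Finset Ω → ℝ) (t : ℝ) (S : Finset Ω) : Prop :=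
  StableFor m t S ∧ ∀ X : Finset Ω, StableFor m t X → S ⊆ X

/-- `w` represents the selection function `σ` for threshold `t`. -/
def RepresentsAt [DecidableEq Ω] (w : Ω → ℝ) (t : ℝ) (σ : Finset Ω → Finset Ω) : Prop :=
  ∀ E : Finset Ω, (0 < mea w E → IsLeastStable (condMea w E) t (σ E)) ∧
    (mea w E = 0 → σ E = ∅)

/-- Selection axiom (S1): `σ(X) = ∅` only if `X = ∅`. -/
def SelA1 (σ : Finset Ω → Finset Ω) : Prop := ∀ X : Finset Ω, σ X = ∅ → X = ∅

/-- Selection axiom (S2): `σ(X) ⊆ X`. -/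
def SelA2 (σ : Finset Ω → Finset Ω) : Prop := ∀ X : Finset Ω, σ X ⊆ X

/-- Selection axiom (S3): if `σ(A) ∩ B ≠ ∅` then `σ(A ∩ B) ⊆ σ(A) ∩ B`. -/
def SelA3 [DecidableEq Ω] (σ : Finset Ω → Finset Ω) : Prop :=
  ∀ A B : Finset Ω, (σ A ∩ B).Nonempty → σ (A ∩ B) ⊆ σ A ∩ B

/-- Selection axiom (S4ₙ) for every `n`: if `σ(A ∪ Xᵢ) = Xᵢ` for all `i`, then
`σ(A ∪ ⋃ᵢ Xᵢ) ⊆ ⋃ᵢ Xᵢ`. -/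
def SelA4 [DecidableEq Ω] (σ : Finset Ω → Finset Ω) : Prop :=
  ∀ n : ℕ, ∀ A : Finset Ω, ∀ X : Fin (n + 1) → Finset Ω,
    (∀ i, σ (A ∪ X i) = X i) →
    σ (A ∪ univ.biUnion X) ⊆ univ.biUnion X

/-- `ω ≻_σ X` iff `ω ∉ X` and `σ (X ∪ {ω}) = {ω}`. -/
def succS [DecidableEq Ω] (σ : Finset Ω → Finset Ω) (ω : Ω) (X : Finset Ω) : Prop :=
  ω ∉ X ∧ σ (X ∪ {ω}) = {ω}

/-- `X ⪰_σ ω` iff `ω ∈ X` or `σ (X ∪ {ω}) ≠ {ω}`. -/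
def succeqS [DecidableEq Ω] (σ : Finset Ω → Finset Ω) (X : Finset Ω) (ω : Ω) : Prop :=
  ω ∈ X ∨ σ (X ∪ {ω}) ≠ {ω}

/-- `A ⪰*_σ B` iff either `A` is a singleton `{a}` with `a ≻_σ B`, or `B` is a singleton
`{b}` with `A ⪰_σ b`. -/
def geStar [DecidableEq Ω] (σ : Finset Ω → Finset Ω) (A B : Finset Ω) : Prop :=
  (∃ a, A = {a} ∧ succS σ a B) ∨ (∃ b, B = {b} ∧ succeqS σ A b)

/-- Two sequences of sets are balanced: every state occurs in exactly as many `A i`'s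
as `B i`'s. -/
def BalancedSeq {n : ℕ} (A B : Fin n → Finset Ω) : Prop :=
  ∀ ω : Ω, Nat.card {i // ω ∈ A i} = Nat.card {i // ω ∈ B i}

/-- `(A_i) ≤₀ (B_i)`: every state occurs in at most as many `A i`'s as `B i`'s. -/
def DomSeq {n : ℕ} (A B : Fin n → Finset Ω) : Prop :=
  ∀ ω : Ω, Nat.card {i // ω ∈ A i} ≤ Nat.card {i // ω ∈ B i}

/-- The (Scott) axiom for the induced order `⪰*_σ`. -/
def ScottAx [DecidableEq Ω] (σ : Finset Ω → Finset Ω) : Prop :=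
  ∀ n : ℕ, ∀ A B : Fin (n + 1) → Finset Ω, BalancedSeq A B →
    (∀ i, geStar σ (A i) (B i)) → ∀ i, geStar σ (B i) (A i)

/-!
A weight function that strictly represents `lt` and weakly represents `le` is a solution of finitely
many homogeneous linear inequalities with rational coefficients. By Farkas' lemma, the system has no
solution only if some of its functionals, one of the strict ones among them, add up to `0` with
nonnegative rational multiplicities, which may be taken to be natural numbers. Repeating each pair
of sets as often as its multiplicity says turns such a relation into a violation of (GS), in which
the multiplicities of the functionals `w ↦ w ω` account for the slack in `≤₀`.
-/

open Module

section Farkas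

variable {𝕜 W ι : Type*} [Field 𝕜] [LinearOrder 𝕜] [AddCommGroup W] [Module 𝕜 W]

theorem sub_smul_nonneg_of_forall_nonneg {s : Finset ι} {a : ι → Dual 𝕜 W} {b f : Dual 𝕜 W}
    {y : W} (hfy : f y ≠ 0) (h : ∀ x, 0 ≤ f x → (∀ i ∈ s, 0 ≤ a i x) → 0 ≤ b x) (x : W)
    (hx : ∀ i ∈ s, 0 ≤ (a i - (a i y / f y) • f) x) : 0 ≤ (b - (b y / f y) • f) x := by
  -- `g - (g y / f y) • f` is `g` composed with the projection along `y` onto the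
  -- hyperplane `f = 0`.
  have hproj (g : Dual 𝕜 W) : (g - (g y / f y) • f) x = g (x - (f x / f y) • y) := by
    simp only [LinearMap.sub_apply, LinearMap.smul_apply, map_sub, map_smul, smul_eq_mul]
    ring
  have hf : f (x - (f x / f y) • y) = 0 := by
    rw [map_sub, map_smul, smul_eq_mul, div_mul_cancel₀ _ hfy, sub_self]
  rw [hproj]
  exact h _ hf.ge fun i hi => hproj (a i) ▸ hx i hi

variable [IsStrictOrderedRing 𝕜]

/-- **Farkas' lemma**. -/
theorem mem_hull_image_of_forall_nonneg (s : Finset ι) (a : ι → Dual 𝕜 W) (b : Dual 𝕜 W)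
    (h : ∀ x, (∀ i ∈ s, 0 ≤ a i x) → 0 ≤ b x) : b ∈ PointedCone.hull 𝕜 (a '' s) := by
  classical
  induction s using Finset.induction_on generalizing a b with
  | empty =>
    have hb : b = 0 := by
      ext x
      have hneg : 0 ≤ -b x := by simpa only [map_neg] using h (-x) (by simp)
      exact le_antisymm (neg_nonneg.mp hneg) (h x (by simp))
    exact hb ▸ zero_mem _
  | insert j s _ ih =>
    set C := PointedCone.hull 𝕜 (a '' ↑(insert j s))
    have ha (i) (hi : i ∈ insert j s) : a i ∈ C := PointedCone.subset_hull ⟨i, hi, rfl⟩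
    simp only [Finset.forall_mem_insert] at h ha
    by_cases hb : ∀ x, (∀ i ∈ s, 0 ≤ a i x) → 0 ≤ b x
    · exact Submodule.span_le.mpr (Set.image_subset_iff.mpr ha.2) (ih a b hb)
    push Not at hb
    obtain ⟨y, hy, hby⟩ := hb
    have hjy : a j y < 0 := lt_of_not_ge fun hjy => (h y ⟨hjy, hy⟩).not_gt hby
    have hb_proj : b - (b y / a j y) • a j ∈ C := by
      refine Submodule.span_le.mpr (Set.image_subset_iff.mpr fun i hi => ?_)
        (ih (fun i => a i - (a i y / a j y) • a j) _
          (sub_smul_nonneg_of_forall_nonneg hjy.ne fun x hj hs => h x ⟨hj, hs⟩))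
      have hcoef : 0 ≤ -(a i y / a j y) :=
        neg_nonneg.mpr (div_nonpos_of_nonneg_of_nonpos (hy i hi) hjy.le)
      simpa only [neg_smul, ← sub_eq_add_neg, Set.mem_preimage, SetLike.mem_coe] using
        add_mem (ha.2 i hi) (C.smul_mem hcoef ha.1)
    have hcoef : 0 ≤ b y / a j y := (div_pos_of_neg_of_neg hby hjy).le
    simpa only [sub_add_cancel] using add_mem hb_proj (C.smul_mem hcoef ha.1)

end Farkas

section RationalTransposition

theorem exists_pos_forall_mul_eq_natCast {ι : Type*} [Finite ι] (c : ι → ℚ) (hc : ∀ i, 0 ≤ c i) :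
    ∃ N : ℕ, 0 < N ∧ ∃ k : ι → ℕ, ∀ i, N * c i = k i := by
  obtain ⟨d, hd⟩ := IsLocalization.exist_integer_multiples_of_finite (nonZeroDivisors ℤ) c
  choose z hz using hd
  refine ⟨(d : ℤ).natAbs, Int.natAbs_pos.mpr (nonZeroDivisors.coe_ne_zero d),
    fun i => (z i).natAbs, fun i => ?_⟩
  have hz' : (z i : ℚ) = d * c i := by simpa using hz i
  rw [Nat.cast_natAbs, Nat.cast_natAbs, Int.cast_abs, Int.cast_abs, hz', abs_mul,
    abs_of_nonneg (hc i)]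

variable {W ι : Type*} [AddCommGroup W] [Module ℚ W] [Fintype ι]

theorem exists_pos_nsmul_eq_sum_nsmul (a : ι → Dual ℚ W) (b : Dual ℚ W)
    (h : ∀ x, (∀ i, 0 ≤ a i x) → 0 ≤ b x) :
    ∃ N : ℕ, 0 < N ∧ ∃ k : ι → ℕ, N • b = ∑ i, k i • a i := by
  have hb : b ∈ PointedCone.hull ℚ (Set.range a) := by
    simpa using mem_hull_image_of_forall_nonneg univ a b (by simpa using h)
  obtain ⟨c, rfl⟩ := (Submodule.mem_span_range_iff_exists_fun _).mp hb
  obtain ⟨N, hN, k, hk⟩ := exists_pos_forall_mul_eq_natCast (fun i => (c i : ℚ)) fun i => (c i).2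
  refine ⟨N, hN, k, ?_⟩
  rw [Finset.smul_sum]
  refine Finset.sum_congr rfl fun i _ => ?_
  calc N • c i • a i = (N * (c i : ℚ)) • a i := by
        rw [mul_smul, Nat.cast_smul_eq_nsmul, Nonneg.coe_smul]
    _ = k i • a i := by rw [hk, Nat.cast_smul_eq_nsmul]

theorem exists_forall_nonneg_and_pos (a : ι → Dual ℚ W) (j : ι)
    (h : ∀ k : ι → ℕ, ∑ i, k i • a i = 0 → k j = 0) :
    ∃ x, (∀ i, 0 ≤ a i x) ∧ 0 < a j x := by
  classical
  by_contra! hcon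
  obtain ⟨N, hN, k, hk⟩ := exists_pos_nsmul_eq_sum_nsmul a (-a j) fun x hx => by
    simpa using hcon x hx
  have hsum : ∑ i, (k + Pi.single j N : ι → ℕ) i • a i = 0 := by
    simp [add_smul, Finset.sum_add_distrib, ← hk, Pi.single_apply, ite_smul]
  have hkj : k j + N = 0 := by simpa using h _ hsum
  omega

/-- **Motzkin's transposition theorem** over `ℚ`. -/
theorem exists_forall_nonneg_forall_pos (a : ι → Dual ℚ W) (J : Set ι)
    (h : ∀ k : ι → ℕ, ∑ i, k i • a i = 0 → ∀ j ∈ J, k j = 0) :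
    ∃ x, (∀ i, 0 ≤ a i x) ∧ ∀ j ∈ J, 0 < a j x := by
  classical
  choose x hx hxpos using fun j : J =>
    exists_forall_nonneg_and_pos a j fun k hk => h k hk j j.2
  refine ⟨∑ j, x j, fun i => ?_, fun j hj => ?_⟩
  · rw [map_sum]
    exact Finset.sum_nonneg fun j _ => hx j i
  · rw [map_sum]
    exact Finset.sum_pos' (fun l _ => hx l j) ⟨⟨j, hj⟩, Finset.mem_univ _, hxpos ⟨j, hj⟩⟩

end RationalTransposition

section Measure

theorem mea_div (w : Ω → ℝ) (c : ℝ) (A : Finset Ω) : mea (fun ω => w ω / c) A = mea w A / c :=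
  (Finset.sum_div ..).symm

theorem mea_ratCast (v : Ω → ℚ) (A : Finset Ω) :
    mea (fun ω => (v ω : ℝ)) A = ((∑ ω ∈ A, v ω : ℚ) : ℝ) :=
  (Rat.cast_sum ..).symm

theorem isProbWeight_div_mea_univ [Fintype Ω] {w : Ω → ℝ} (hw : ∀ ω, 0 ≤ w ω)
    (hpos : 0 < mea w univ) : IsProbWeight fun ω => w ω / mea w univ :=
  ⟨fun ω => div_nonneg (hw ω) hpos.le, (mea_div w _ univ).trans (div_self hpos.ne')⟩

theorem sum_mea_of_subset {ι : Type*} [Fintype ι] (w : Ω → ℝ) {A : ι → Finset Ω} {S : Finset Ω}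
    (hS : ∀ i, A i ⊆ S) : ∑ i, mea w (A i) = ∑ ω ∈ S, Nat.card {i // ω ∈ A i} * w ω := by
  classical
  calc ∑ i, mea w (A i) = ∑ ω ∈ S, ∑ i with ω ∈ A i, w ω :=
        Finset.sum_comm' fun i ω => by simpa using @hS i ω
    _ = ∑ ω ∈ S, Nat.card {i // ω ∈ A i} * w ω := by
        simp only [Finset.sum_const, nsmul_eq_mul, Nat.card_eq_fintype_card, Fintype.card_subtype]

theorem DomSeq.sum_mea_le {n : ℕ} {A B : Fin n → Finset Ω} (h : DomSeq A B) {w : Ω → ℝ}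
    (hw : ∀ ω, 0 ≤ w ω) : ∑ i, mea w (A i) ≤ ∑ i, mea w (B i) := by
  classical
  let S := univ.biUnion fun i => A i ∪ B i
  have hS (i) : A i ∪ B i ⊆ S := Finset.subset_biUnion_of_mem (fun i => A i ∪ B i) (mem_univ i)
  rw [sum_mea_of_subset w fun i => Finset.subset_union_left.trans (hS i),
    sum_mea_of_subset w fun i => Finset.subset_union_right.trans (hS i)]
  exact Finset.sum_le_sum fun ω _ => mul_le_mul_of_nonneg_right (mod_cast h ω) (hw ω)

end Measure

/-- Condition (GS) for the pair of relations `(lt, le)`. A sequence of length `n + 1 ≥ 1` is indexed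
by `Fin (n + 1)`, so that `Fin.last n` is the distinguished last index. -/
def GSAx (lt le : Finset Ω → Finset Ω → Prop) : Prop :=
  ∀ n : ℕ, ∀ A B : Fin (n + 1) → Finset Ω, DomSeq A B →
    (∀ i : Fin n, le (B i.castSucc) (A i.castSucc) ∨ lt (B i.castSucc) (A i.castSucc)) →
    ¬ lt (B (Fin.last n)) (A (Fin.last n))

section Representation

variable {lt le : Finset Ω → Finset Ω → Prop}

theorem gsAx_of_forall_mea {w : Ω → ℝ} (hw : ∀ ω, 0 ≤ w ω)
    (hlt : ∀ A B, lt A B → mea w A < mea w B) (hle : ∀ A B, le A B → mea w A ≤ mea w B) :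
    GSAx lt le := by
  intro n A B hdom hinit hlast
  have hsum_lt : ∑ i, mea w (B i) < ∑ i, mea w (A i) := by
    rw [Fin.sum_univ_castSucc, Fin.sum_univ_castSucc]
    refine add_lt_add_of_le_of_lt (Finset.sum_le_sum fun i _ => ?_) (hlt _ _ hlast)
    exact (hinit i).elim (hle _ _) fun h => (hlt _ _ h).le
  exact hsum_lt.not_ge (hdom.sum_mea_le hw)

theorem GSAx.not_lt_of_natCard_le (hGS : GSAx lt le) {ι : Type*} [Finite ι] (A B : ι → Finset Ω)
    (hdom : ∀ ω, Nat.card {i // ω ∈ A i} ≤ Nat.card {i // ω ∈ B i})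
    (h : ∀ i, le (B i) (A i) ∨ lt (B i) (A i)) (j : ι) : ¬ lt (B j) (A j) := by
  classical
  obtain ⟨n, hn⟩ : ∃ n, Nat.card ι = n + 1 :=
    Nat.exists_eq_succ_of_ne_zero (have : Nonempty ι := ⟨j⟩; Nat.card_pos.ne')
  let e : Fin (n + 1) ≃ ι := (Finite.equivFinOfCardEq hn).symm.setValue (Fin.last n) j
  have he : e (Fin.last n) = j := Equiv.setValue_eq ..
  have hcard (C : ι → Finset Ω) (ω : Ω) :
      Nat.card {i // ω ∈ C (e i)} = Nat.card {i // ω ∈ C i} :=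
    Nat.card_congr (e.subtypeEquiv fun _ => Iff.rfl)
  have hdom_e : DomSeq (A ∘ e) (B ∘ e) := fun ω => by
    simpa only [Function.comp_apply, hcard] using hdom ω
  simpa only [Function.comp_apply, he] using hGS n (A ∘ e) (B ∘ e) hdom_e fun i => h _

theorem natCard_sigma_fin_mem [DecidableEq Ω] {Q : Type*} [Fintype Q] (k : Q → ℕ)
    (A : Q → Finset Ω) (ω : Ω) :
    Nat.card {i : Σ q, Fin (k q) // ω ∈ A i.1} = ∑ q with ω ∈ A q, k q := by
  rw [Nat.card_congr (Equiv.subtypeSigmaEquiv _ fun q => ω ∈ A q), Nat.card_sigma]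
  simp only [Nat.card_fin]
  exact (Finset.sum_subtype _ (by simp) k).symm

theorem GSAx.eq_zero_of_sum_le_sum [DecidableEq Ω] (hGS : GSAx lt le) {Q : Type*} [Fintype Q]
    {A B : Q → Finset Ω} {k : Q → ℕ} (h : ∀ q, le (B q) (A q) ∨ lt (B q) (A q))
    (hk : ∀ ω, ∑ q with ω ∈ A q, k q ≤ ∑ q with ω ∈ B q, k q) {p : Q} (hp : lt (B p) (A p)) :
    k p = 0 := by
  by_contra hkp
  refine hGS.not_lt_of_natCard_le (fun i : Σ q, Fin (k q) => A i.1) (fun i => B i.1) (fun ω => ?_)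
    (fun i => h i.1) ⟨p, ⟨0, Nat.pos_of_ne_zero hkp⟩⟩ hp
  rw [natCard_sigma_fin_mem, natCard_sigma_fin_mem]
  exact hk ω

/-- The measure of `A` as a linear functional of the weights, which are rational here so that the
multipliers in Motzkin's theorem can be taken in `ℕ`. -/
def sumOn (A : Finset Ω) : Dual ℚ (Ω → ℚ) := ∑ ω ∈ A, LinearMap.proj ω

theorem sumOn_apply (A : Finset Ω) (v : Ω → ℚ) : sumOn A v = ∑ ω ∈ A, v ω := by
  simp only [sumOn, LinearMap.sum_apply, LinearMap.proj_apply]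

theorem sumOn_single [DecidableEq Ω] (A : Finset Ω) (ω : Ω) :
    sumOn A (Pi.single ω 1) = if ω ∈ A then 1 else 0 := by
  rw [sumOn_apply, Finset.sum_pi_single']

theorem sum_nsmul_sumOn_single [DecidableEq Ω] {Q : Type*} [Fintype Q] (k : Q → ℕ)
    (A : Q → Finset Ω) (ω : Ω) :
    ∑ q, k q • sumOn (A q) (Pi.single ω 1) = ((∑ q with ω ∈ A q, k q : ℕ) : ℚ) := by
  simp only [sumOn_single, Finset.sum_filter, nsmul_eq_mul, mul_ite, mul_one, mul_zero,
    Nat.cast_sum, Nat.cast_ite, Nat.cast_zero]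

theorem sum_le_sum_of_sum_nsmul_eq_zero [Fintype Ω] [DecidableEq Ω] {Q : Type*} [Fintype Q]
    {A B : Q → Finset Ω} {m : Ω → ℕ} {k : Q → ℕ}
    (h : ∑ ω, m ω • (LinearMap.proj ω : Dual ℚ (Ω → ℚ)) +
      ∑ q, k q • (sumOn (A q) - sumOn (B q)) = 0) (ω : Ω) :
    ∑ q with ω ∈ A q, k q ≤ ∑ q with ω ∈ B q, k q := by
  have hω := LinearMap.congr_fun h (Pi.single ω 1)
  have hsingle : 0 ≤ (Pi.single ω 1 : Ω → ℚ) := Pi.single_nonneg.mpr zero_le_one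
  have hm : 0 ≤ ∑ ω', m ω' • (Pi.single ω 1 : Ω → ℚ) ω' :=
    Finset.sum_nonneg fun ω' _ => nsmul_nonneg (hsingle ω') _
  simp only [LinearMap.add_apply, LinearMap.sum_apply, LinearMap.smul_apply, LinearMap.proj_apply,
    LinearMap.sub_apply, LinearMap.zero_apply, smul_sub, Finset.sum_sub_distrib,
    sum_nsmul_sumOn_single] at hω
  have hle : ((∑ q with ω ∈ A q, k q : ℕ) : ℚ) ≤ (∑ q with ω ∈ B q, k q : ℕ) := by linarith
  exact_mod_cast hle

theorem GSAx.exists_weight [Finite Ω] (hGS : GSAx lt le) :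
    ∃ w : Ω → ℝ, (∀ ω, 0 ≤ w ω) ∧ (∀ A B, lt A B → mea w A < mea w B) ∧
      ∀ A B, le A B → mea w A ≤ mea w B := by
  classical
  cases nonempty_fintype Ω
  let Q := {q : Finset Ω × Finset Ω // le q.1 q.2 ∨ lt q.1 q.2}
  let a : Ω ⊕ Q → Dual ℚ (Ω → ℚ) :=
    Sum.elim LinearMap.proj fun q => sumOn q.1.2 - sumOn q.1.1
  obtain ⟨v, hv, hvpos⟩ := exists_forall_nonneg_forall_pos a
      (Sum.inr '' {q | lt q.1.1 q.1.2}) <| by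
    rintro k hk _ ⟨p, hp, rfl⟩
    rw [Fintype.sum_sum_type] at hk
    exact hGS.eq_zero_of_sum_le_sum (fun q : Q => q.2) (sum_le_sum_of_sum_nsmul_eq_zero hk) hp
  refine ⟨fun ω => v ω, fun ω => Rat.cast_nonneg.mpr (hv (.inl ω)), fun A B h => ?_,
    fun A B h => ?_⟩
  · have hAB : 0 < sumOn B v - sumOn A v := hvpos _ ⟨⟨(A, B), .inr h⟩, h, rfl⟩
    rw [mea_ratCast, mea_ratCast, Rat.cast_lt, ← sumOn_apply, ← sumOn_apply]
    exact sub_pos.mp hAB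
  · have hAB : 0 ≤ sumOn B v - sumOn A v := hv (.inr ⟨(A, B), .inl h⟩)
    rw [mea_ratCast, mea_ratCast, Rat.cast_le, ← sumOn_apply, ← sumOn_apply]
    exact sub_nonneg.mp hAB

end Representation

/-- Representation theorem for joint weak representability, Theorem `strongrep`:
with `<` nonempty, the pair `(<, ≤)` is jointly weakly representable by a probability measure
iff condition (GS) holds. -/
theorem stmt0 [Fintype Ω] [Nonempty Ω]
    (lt le : Finset Ω → Finset Ω → Prop)
    (hlt : ∃ A B : Finset Ω, lt A B) :
    (∃ w : Ω → ℝ, IsProbWeight w ∧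
        (∀ A B : Finset Ω, lt A B → mea w A < mea w B) ∧
        (∀ A B : Finset Ω, le A B → mea w A ≤ mea w B)) ↔
      (∀ n : ℕ, ∀ A B : Fin (n + 1) → Finset Ω, DomSeq A B →
        (∀ i : Fin n, le (B i.castSucc) (A i.castSucc) ∨ lt (B i.castSucc) (A i.castSucc)) →
        ¬ lt (B (Fin.last n)) (A (Fin.last n))) := by
  constructor
  · rintro ⟨w, ⟨hw, -⟩, hw_lt, hw_le⟩
    exact gsAx_of_forall_mea hw hw_lt hw_le
  · intro hGS
    obtain ⟨w, hw, hw_lt, hw_le⟩ := GSAx.exists_weight hGS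
    have hpos : 0 < mea w univ := by
      obtain ⟨A, B, hAB⟩ := hlt
      calc 0 ≤ mea w A := Finset.sum_nonneg fun ω _ => hw ω
        _ < mea w B := hw_lt A B hAB
        _ ≤ mea w univ := Finset.sum_le_univ_sum_of_nonneg hw
    refine ⟨_, isProbWeight_div_mea_univ hw hpos, fun A B h => ?_, fun A B h => ?_⟩
    · rw [mea_div, mea_div]
      exact div_lt_div_of_pos_right (hw_lt A B h) hpos
    · rw [mea_div, mea_div]
      exact div_le_div_of_nonneg_right (hw_le A B h) hpos.le
end

section
/- Let Ω be a finite nonempty set and ≤ a binary relation on the powerset of Ω. The following are equivalent: (1) ≤ satisfies (AR): for every n ≥ 1 and sequences (A_i)_{i≤n}, (B_i)_{i≤n} of subsets of Ω such that every ω ∈ Ω belongs to strictly more B_i's than A_i's, if B_i ≤ A_i for all i < n then it is not the case that B_n ≤ A_n; (2) for every n ≥ 1 and sequences (A_i)_{i≤n}, (B_i)_{i≤n} such that the sequence (Ω, A_1, …, A_n) is ≤₀-dominated by the sequence (∅, B_1, …, B_n), if B_i ≤ A_i for all i < n then it is not the case that B_n ≤ A_n; (3) there exists a nonempty binary relation <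 on the powerset of Ω such that the pair (<, ≤) satisfies (GS): for all sequences (A_i)_{i≤n} ≤₀ (B_i)_{i≤n}, if for every i < n either B_i ≤ A_i or B_i < A_i, then it is not the case that B_n < A_n. -/
open Finset

variable {Ω : Type*}

/-!
Putting `Ω` in front of the `A i` and `∅` in front of the `B i` adds one to every count on the left
and nothing on the right, turning `<` between counts into `≤`; this is (1) ↔ (2).

For (1) → (3), let `<` hold only of the pair `(∅, Ω)`. Deleting all the pairs `(B i, A i) = (∅, Ω)`
from a violation of (GS) leaves the counts of the `B i` unchanged and strictly lowers those of the
`A i`, so what remains is a violation of (AR).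

For (3) → (1), appending any pair `X < Y` to a violation of (AR) moves each count by at most one, so
`<` between counts weakens at worst to `≤`, and the result is a violation of (GS).
-/

/-- The number of members of the family `A` that contain `ω`, in which the comparisons of
`DomSeq`, (AR) and (GS) are expressed. It is a `Nat.card`, so it is only meaningful when finitely
many members contain `ω`. -/
noncomputable def coverCount {ι : Type*} (A : ι → Finset Ω) (ω : Ω) : ℕ :=
  Nat.card {i // ω ∈ A i}

/-- Condition (AR) for `≤`, on sequences indexed by `Fin (n + 1)` so that the paper's `n ≥ 1` is
built in. -/
def SatisfiesAR (le : Finset Ω → Finset Ω → Prop) : Prop :=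
  ∀ n : ℕ, ∀ A B : Fin (n + 1) → Finset Ω, (∀ ω, coverCount A ω < coverCount B ω) →
    (∀ i : Fin n, le (B i.castSucc) (A i.castSucc)) → ¬ le (B (Fin.last n)) (A (Fin.last n))

/-- The reformulation (2) of (AR), in which strict domination is expressed by `≤₀` between
the sequences extended by `Ω` and `∅`. -/
def SatisfiesARCons [Fintype Ω] (le : Finset Ω → Finset Ω → Prop) : Prop :=
  ∀ n : ℕ, ∀ A B : Fin (n + 1) → Finset Ω,
    DomSeq (Fin.cons (univ : Finset Ω) A) (Fin.cons (∅ : Finset Ω) B) →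
    (∀ i : Fin n, le (B i.castSucc) (A i.castSucc)) → ¬ le (B (Fin.last n)) (A (Fin.last n))

/-- Condition (GS) for the pair `(<, ≤)`, on sequences indexed by `Fin (n + 1)` because it
refers to a last member. -/
def SatisfiesGS (lt le : Finset Ω → Finset Ω → Prop) : Prop :=
  ∀ n : ℕ, ∀ A B : Fin (n + 1) → Finset Ω, DomSeq A B →
    (∀ i : Fin n, le (B i.castSucc) (A i.castSucc) ∨ lt (B i.castSucc) (A i.castSucc)) →
    ¬ lt (B (Fin.last n)) (A (Fin.last n))

section CoverCount

variable {ι κ : Type*} {ω : Ω}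

theorem coverCount_comp_equiv (A : ι → Finset Ω) (e : κ ≃ ι) (ω : Ω) :
    coverCount (A ∘ e) ω = coverCount A ω :=
  Nat.card_congr (e.subtypeEquiv fun _ => Iff.rfl)

theorem coverCount_domRestrict (A : ι → Finset Ω) (s : Set ι) (ω : Ω) :
    coverCount (s.domRestrict A) ω = (s ∩ {i | ω ∈ A i}).ncard :=
  Nat.card_congr (Equiv.subtypeSubtypeEquivSubtypeInter (· ∈ s) (ω ∈ A ·))

theorem coverCount_domRestrict_lt [Finite ι] {A : ι → Finset Ω} {s : Set ι} {i : ι}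
    (hi : i ∉ s) (hω : ω ∈ A i) : coverCount (s.domRestrict A) ω < coverCount A ω := by
  rw [coverCount_domRestrict]
  exact Set.ncard_lt_ncard ⟨Set.inter_subset_right, fun h => hi (h hω).1⟩

theorem coverCount_domRestrict_eq {A : ι → Finset Ω} {s : Set ι} (h : ∀ i ∉ s, ω ∉ A i) :
    coverCount (s.domRestrict A) ω = coverCount A ω := by
  rw [coverCount_domRestrict, Set.inter_eq_right.2]
  · rfl
  · exact fun i hi => by_contra fun his => h i his hi

theorem coverCount_cons {n : ℕ} (X : Finset Ω) (A : Fin n → Finset Ω) (ω : Ω)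
    [Decidable (ω ∈ X)] :
    coverCount (Fin.cons X A : Fin (n + 1) → Finset Ω) ω =
      coverCount A ω + if ω ∈ X then 1 else 0 := by
  classical
  simp only [coverCount, Nat.card_eq_fintype_card, Fintype.card_subtype,
    Fin.card_filter_univ_succ, Fin.cons_zero, Fin.cons_succ]
  split_ifs <;> rfl

theorem coverCount_snoc {n : ℕ} (A : Fin n → Finset Ω) (X : Finset Ω) (ω : Ω)
    [Decidable (ω ∈ X)] :
    coverCount (Fin.snoc A X : Fin (n + 1) → Finset Ω) ω =
      coverCount A ω + if ω ∈ X then 1 else 0 := by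
  rw [Fin.snoc_eq_cons_rotate, ← coverCount_cons]
  exact coverCount_comp_equiv _ (finRotate (n + 1)) ω

end CoverCount

section DomSeq

variable {n : ℕ} {A B : Fin n → Finset Ω}

theorem domSeq_iff_coverCount_le : DomSeq A B ↔ ∀ ω, coverCount A ω ≤ coverCount B ω :=
  Iff.rfl

theorem domSeq_cons_univ_cons_empty [Fintype Ω] :
    DomSeq (Fin.cons (univ : Finset Ω) A) (Fin.cons (∅ : Finset Ω) B) ↔
      ∀ ω, coverCount A ω < coverCount B ω := by
  classical
  simp only [domSeq_iff_coverCount_le, coverCount_cons, mem_univ, notMem_empty, if_true,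
    if_false, add_zero, Nat.add_one_le_iff]

theorem domSeq_snoc_snoc (h : ∀ ω, coverCount A ω < coverCount B ω) (X Y : Finset Ω) :
    DomSeq (Fin.snoc A X) (Fin.snoc B Y) := by
  classical
  rw [domSeq_iff_coverCount_le]
  intro ω
  have hω := h ω
  rw [coverCount_snoc, coverCount_snoc]
  split_ifs <;> omega

end DomSeq

section Relations

variable {le lt : Finset Ω → Finset Ω → Prop}

theorem satisfiesAR_iff_satisfiesARCons [Fintype Ω] : SatisfiesAR le ↔ SatisfiesARCons le := by
  simp only [SatisfiesAR, SatisfiesARCons, domSeq_cons_univ_cons_empty]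

theorem SatisfiesAR.exists_not_le [Nonempty Ω] (h : SatisfiesAR le) {ι : Type*} [Finite ι]
    {A B : ι → Finset Ω} (hAB : ∀ ω, coverCount A ω < coverCount B ω) :
    ∃ i, ¬ le (B i) (A i) := by
  by_contra! hle
  obtain ⟨n, ⟨e⟩⟩ := Finite.exists_equiv_fin ι
  have hcount : ∀ ω, coverCount (A ∘ e.symm) ω < coverCount (B ∘ e.symm) ω := by
    simpa only [coverCount_comp_equiv] using hAB
  cases n with
  | zero =>
    obtain ⟨ω⟩ := ‹Nonempty Ω›
    exact (hcount ω).ne (Nat.card_of_isEmpty.trans Nat.card_of_isEmpty.symm)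
  | succ n => exact h n _ _ hcount (fun _ => hle _) (hle _)

theorem SatisfiesAR.satisfiesGS [Fintype Ω] [Nonempty Ω] (h : SatisfiesAR le) :
    SatisfiesGS (fun X Y => X = ∅ ∧ Y = univ) le := by
  rintro n A B hdom hrel hlast
  let s : Set (Fin (n + 1)) := {i | ¬ (B i = ∅ ∧ A i = univ)}
  have hcount (ω : Ω) : coverCount (s.domRestrict A) ω < coverCount (s.domRestrict B) ω :=
    calc coverCount (s.domRestrict A) ω
        < coverCount A ω := coverCount_domRestrict_lt (not_not.2 hlast) (hlast.2 ▸ mem_univ ω)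
      _ ≤ coverCount B ω := hdom ω
      _ = coverCount (s.domRestrict B) ω :=
        (coverCount_domRestrict_eq fun i hi => (not_not.1 hi).1 ▸ notMem_empty ω).symm
  obtain ⟨⟨i, hi⟩, hnle⟩ := h.exists_not_le hcount
  cases i using Fin.lastCases with
  | last => exact hi hlast
  | cast i => exact hnle ((hrel i).resolve_right hi)

theorem SatisfiesGS.satisfiesAR (h : SatisfiesGS lt le) {X Y : Finset Ω} (hXY : lt X Y) :
    SatisfiesAR le := by
  intro n A B hcount hinit hlast
  refine h (n + 1) (Fin.snoc A Y) (Fin.snoc B X) (domSeq_snoc_snoc hcount Y X)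
    (fun i => Or.inl ?_) (by simpa only [Fin.snoc_last] using hXY)
  simp only [Fin.snoc_castSucc]
  cases i using Fin.lastCases with
  | last => exact hlast
  | cast i => exact hinit i

theorem satisfiesAR_iff_exists_satisfiesGS [Finite Ω] [Nonempty Ω] :
    SatisfiesAR le ↔ ∃ lt : Finset Ω → Finset Ω → Prop, (∃ X Y, lt X Y) ∧ SatisfiesGS lt le where
  mp h := by
    cases nonempty_fintype Ω
    exact ⟨_, ⟨∅, univ, rfl, rfl⟩, h.satisfiesGS⟩
  mpr := fun ⟨_, ⟨_, _, hXY⟩, hGS⟩ => hGS.satisfiesAR hXY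

end Relations

/-- equivalence of (1) the (AR) axiom, (2) its reformulation with the
sequences extended by `Ω` and `∅`, and (3) the existence of a nonempty strict relation `<`
such that the pair `(<, ≤)` satisfies (GS). -/
theorem stmt3 [Fintype Ω] [Nonempty Ω] (le : Finset Ω → Finset Ω → Prop) :
    ((∀ n : ℕ, ∀ A B : Fin (n + 1) → Finset Ω,
        (∀ ω : Ω, Nat.card {i // ω ∈ A i} < Nat.card {i // ω ∈ B i}) →
        (∀ i : Fin n, le (B i.castSucc) (A i.castSucc)) →
        ¬ le (B (Fin.last n)) (A (Fin.last n))) ↔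
      (∀ n : ℕ, ∀ A B : Fin (n + 1) → Finset Ω,
        DomSeq (Fin.cons (Finset.univ : Finset Ω) A) (Fin.cons (∅ : Finset Ω) B) →
        (∀ i : Fin n, le (B i.castSucc) (A i.castSucc)) →
        ¬ le (B (Fin.last n)) (A (Fin.last n)))) ∧
    ((∀ n : ℕ, ∀ A B : Fin (n + 1) → Finset Ω,
        DomSeq (Fin.cons (Finset.univ : Finset Ω) A) (Fin.cons (∅ : Finset Ω) B) →
        (∀ i : Fin n, le (B i.castSucc) (A i.castSucc)) →
        ¬ le (B (Fin.last n)) (A (Fin.last n))) ↔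
      (∃ lt : Finset Ω → Finset Ω → Prop, (∃ A B : Finset Ω, lt A B) ∧
        (∀ n : ℕ, ∀ A B : Fin (n + 1) → Finset Ω, DomSeq A B →
          (∀ i : Fin n, le (B i.castSucc) (A i.castSucc) ∨ lt (B i.castSucc) (A i.castSucc)) →
          ¬ lt (B (Fin.last n)) (A (Fin.last n))))) :=
  ⟨satisfiesAR_iff_satisfiesARCons,
    satisfiesAR_iff_satisfiesARCons.symm.trans satisfiesAR_iff_exists_satisfiesGS⟩
end

section
/- Let Ω be a finite nonempty set, μ a probability measure on Ω, t ∈ [1/2, 1), and A, B, C ⊆ Ω with μ(A∩B) > 0. Suppose S is the ⊆-least (μ_A, t)-stable set, S∩B ≠ ∅, and S ⊆ C. Then S∩B is (μ_{A∩B}, t)-stable, and consequently every ⊆-least (μ_{A∩B}, t)-stable set is a subset of S∩B, hence a subset of C (this is the Rational Monotonicity property of probabilistically stable revision). -/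
open Finset

variable {Ω : Type*}

/-
Conditioning on `A ∩ B` is the same as conditioning on `A` and then on `B`, so it suffices that
stability survives conditioning. After conditioning on `B`, the stability requirement on `X ∩ B` at
`E` is the requirement on `X` at `B ∩ E`, because the common factor `1 / m B` cancels in the ratio.
-/

theorem mea_mono {w : Ω → ℝ} (hw : ∀ ω, 0 ≤ w ω) : Monotone (mea w) := fun _ _ hXY =>
  sum_le_sum_of_subset_of_nonneg hXY fun ω _ _ => hw ω

theorem condMea_inter_eq_div [DecidableEq Ω] {w : Ω → ℝ} {A : Finset Ω} (hA : mea w A ≠ 0)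
    (B E : Finset Ω) :
    condMea w (A ∩ B) E = condMea w A (B ∩ E) / condMea w A B := by
  simp only [condMea, div_div_div_cancel_right₀ hA, inter_assoc]

theorem StableFor.inter_cond [DecidableEq Ω] {m : Finset Ω → ℝ} {t : ℝ} {X B : Finset Ω}
    (hX : StableFor m t X) (hB : 0 < m B) (hXB : (X ∩ B).Nonempty) :
    StableFor (fun E => m (B ∩ E) / m B) t (X ∩ B) := by
  refine ⟨hXB, fun E hE hmE => ?_⟩
  have hBE : 0 < m (B ∩ E) := (div_pos_iff_of_pos_right hB).mp hmE
  have hXBE : (X ∩ (B ∩ E)).Nonempty := by rwa [← inter_assoc]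
  have hinter : B ∩ (X ∩ B ∩ E) = X ∩ (B ∩ E) := by grind
  calc t < m (X ∩ (B ∩ E)) / m (B ∩ E) := hX.2 (B ∩ E) hXBE hBE
    _ = m (B ∩ (X ∩ B ∩ E)) / m B / (m (B ∩ E) / m B) := by
      rw [hinter, div_div_div_cancel_right₀ hB.ne']

theorem StableFor.condMea_inter [DecidableEq Ω] {w : Ω → ℝ} {t : ℝ} {A B X : Finset Ω}
    (hX : StableFor (condMea w A) t X) (hA : 0 < mea w A) (hAB : 0 < mea w (A ∩ B))
    (hXB : (X ∩ B).Nonempty) : StableFor (condMea w (A ∩ B)) t (X ∩ B) := by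
  have hB : 0 < condMea w A B := div_pos hAB hA
  simpa only [← condMea_inter_eq_div hA.ne'] using hX.inter_cond hB hXB

theorem stmt5_general [DecidableEq Ω] (w : Ω → ℝ) (hw : ∀ ω, 0 ≤ w ω) (t : ℝ)
    (A B C S : Finset Ω) (hAB : 0 < mea w (A ∩ B)) (hS : StableFor (condMea w A) t S)
    (hSB : (S ∩ B).Nonempty) (hSC : S ⊆ C) :
    StableFor (condMea w (A ∩ B)) t (S ∩ B) ∧
      ∀ S' : Finset Ω, IsLeastStable (condMea w (A ∩ B)) t S' → S' ⊆ S ∩ B ∧ S' ⊆ C := by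
  have hA : 0 < mea w A := hAB.trans_le (mea_mono hw inter_subset_left)
  have hstable : StableFor (condMea w (A ∩ B)) t (S ∩ B) := hS.condMea_inter hA hAB hSB
  refine ⟨hstable, fun S' hS' => ?_⟩
  have hS'S : S' ⊆ S ∩ B := hS'.2 _ hstable
  exact ⟨hS'S, hS'S.trans (inter_subset_left.trans hSC)⟩

/-- Rational Monotonicity, Observation `RATMON`: if `S` is the `⊆`-least
`(μ_A,t)`-stable set, `S ∩ B ≠ ∅` and `S ⊆ C`, then `S ∩ B` is `(μ_{A∩B},t)`-stable, and
every `⊆`-least `(μ_{A∩B},t)`-stable set is included in `S ∩ B`, hence in `C`. -/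
theorem stmt5 [Fintype Ω] [DecidableEq Ω] [Nonempty Ω]
    (w : Ω → ℝ) (hw : IsProbWeight w)
    (t : ℝ) (ht0 : 1 / 2 ≤ t) (ht1 : t < 1)
    (A B C S : Finset Ω)
    (hAB : 0 < mea w (A ∩ B))
    (hS : IsLeastStable (condMea w A) t S)
    (hSB : (S ∩ B).Nonempty)
    (hSC : S ⊆ C) :
    StableFor (condMea w (A ∩ B)) t (S ∩ B) ∧
      ∀ S' : Finset Ω, IsLeastStable (condMea w (A ∩ B)) t S' → S' ⊆ S ∩ B ∧ S' ⊆ C := by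
  exact stmt5_general w hw.1 t A B C S hAB hS.1 hSB hSC
end

section
/- Let Ω be a finite nonempty set, t ∈ [1/2, 1), and μ, ρ two probability measures on Ω. For a probability measure ν define the relation A ⊢_ν B (for A, B ⊆ Ω) to hold iff ν(A) = 0 or there exists S ⊆ B that is the ⊆-least (ν_A, t)-stable set. Then ⊢_μ and ⊢_ρ coincide (as relations on pairs of subsets of Ω) if and only if (a) μ and ρ have the same support, i.e. for every X ⊆ Ω, μ(X) = 0 iff ρ(X) = 0, and (b) for every ω ∈ Ω and X ⊆ Ω with ω ∉ X, μ({ω}) > (t/(1−t))·μ(X) iff ρ({ω}) > (t/(1−t))·ρ(X). -/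
open Finset

variable {Ω : Type*}

/-- The stability-based consequence relation: `A ⊢_ν B` iff `ν(A) = 0` or some `S ⊆ B` is the
`⊆`-least `(ν_A, t)`-stable set. -/
def Ent [DecidableEq Ω] (w : Ω → ℝ) (t : ℝ) (A B : Finset Ω) : Prop :=
  mea w A = 0 ∨ ∃ S : Finset Ω, S ⊆ B ∧ IsLeastStable (condMea w A) t S

/-!
A nonempty set `X` is stable for `μ_A` if and only if it has full measure in `A`, or it lies in `A`
and each of its points alone outweighs `A \ X` at odds `t : 1 - t`. Hence stability, and with it the
consequence relation, depends only on the data in (a) and (b). Conversely, `A ⊢ ∅` says that `A` has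
measure zero, which recovers (a). A singleton `{ω}` that is stable for `μ_(X ∪ {ω})` is moreover
least when `1 / 2 ≤ t`, because then `ω` has at least the weight of `X` and no stable set can miss
it; so (b) is read off from `X ∪ {ω} ⊢ {ω}`.
-/

section Stability

theorem div_one_sub_mul_lt_iff {K : Type*} [Field K] [LinearOrder K] [IsStrictOrderedRing K]
    {t : K} (ht1 : t < 1) {a b : K} :
    t / (1 - t) * b < a ↔ t * (a + b) < a := by
  rw [div_mul_eq_mul_div, div_lt_iff₀ (sub_pos.2 ht1)]
  constructor <;> intro h <;> linarith

variable {w : Ω → ℝ} {t : ℝ} {A X Y : Finset Ω} {ω : Ω}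

theorem mea_nonneg (hw : ∀ ω, 0 ≤ w ω) (A : Finset Ω) : 0 ≤ mea w A :=
  sum_nonneg fun ω _ ↦ hw ω

theorem mea_mono_s8 (hw : ∀ ω, 0 ≤ w ω) (h : X ⊆ Y) : mea w X ≤ mea w Y :=
  sum_le_sum_of_subset_of_nonneg h fun ω _ _ ↦ hw ω

variable [DecidableEq Ω]

theorem mea_inter_add_mea_sdiff (w : Ω → ℝ) (A X : Finset Ω) :
    mea w (A ∩ X) + mea w (A \ X) = mea w A :=
  sum_inter_add_sum_sdiff A X w

theorem mea_insert (w : Ω → ℝ) (hω : ω ∉ X) : mea w (insert ω X) = mea w {ω} + mea w X := by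
  simp only [mea, sum_insert hω, sum_singleton]

theorem stableFor_condMea_iff_forall_inter (ht1 : t < 1) (hA : 0 < mea w A) :
    StableFor (condMea w A) t X ↔ X.Nonempty ∧ ∀ E : Finset Ω, (X ∩ E).Nonempty →
      0 < mea w (A ∩ E) → t / (1 - t) * mea w ((A ∩ E) \ X) < mea w (A ∩ E ∩ X) := by
  refine and_congr_right fun _ ↦ forall₂_congr fun E _ ↦ ?_
  rw [condMea, div_pos_iff_of_pos_right hA]
  refine imp_congr_right fun hE ↦ ?_
  rw [condMea, div_div_div_cancel_right₀ hA.ne', lt_div_iff₀ hE, div_one_sub_mul_lt_iff ht1,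
    mea_inter_add_mea_sdiff, inter_comm X E, inter_assoc]

theorem StableFor.mul_mea_sdiff_lt_mea_inter_singleton (ht1 : t < 1) (hw : ∀ ω, 0 ≤ w ω)
    (hX : StableFor (condMea w A) t X) (hAX : 0 < mea w (A \ X)) (hω : ω ∈ X) :
    t / (1 - t) * mea w (A \ X) < mea w (A ∩ {ω}) := by
  have hA : 0 < mea w A := hAX.trans_le (mea_mono_s8 hw sdiff_subset)
  -- The test set leaving `ω` the least room: all of `A \ X`, but only `ω` from `X`.
  set E := insert ω (A \ X)
  have hE_sdiff : (A ∩ E) \ X = A \ X := by grind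
  have hE_inter : A ∩ E ∩ X = A ∩ {ω} := by grind
  have hE : 0 < mea w (A ∩ E) := hAX.trans_le (mea_mono_s8 hw (by grind))
  have hlt := ((stableFor_condMea_iff_forall_inter ht1 hA).1 hX).2 E ⟨ω, by grind⟩ hE
  rwa [hE_sdiff, hE_inter] at hlt

theorem stableFor_condMea_iff (ht0 : 0 ≤ t) (ht1 : t < 1) (hw : ∀ ω, 0 ≤ w ω)
    (hA : 0 < mea w A) :
    StableFor (condMea w A) t X ↔ X.Nonempty ∧
      (mea w (A \ X) = 0 ∨ X ⊆ A ∧ ∀ ω ∈ X, t / (1 - t) * mea w (A \ X) < mea w {ω}) := by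
  have hodds : 0 ≤ t / (1 - t) := div_nonneg ht0 (sub_nonneg.2 ht1.le)
  refine ⟨fun hX ↦ ⟨hX.1, or_iff_not_imp_left.2 fun hne ↦ ?_⟩, fun ⟨hne, hX⟩ ↦ ?_⟩
  · have hlt : ∀ ω ∈ X, t / (1 - t) * mea w (A \ X) < mea w (A ∩ {ω}) := fun ω hω ↦
      hX.mul_mea_sdiff_lt_mea_inter_singleton ht1 hw ((mea_nonneg hw _).lt_of_ne' hne) hω
    refine ⟨fun ω hω ↦ ?_, fun ω hω ↦ (hlt ω hω).trans_le (mea_mono_s8 hw inter_subset_right)⟩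
    by_contra hωA
    have hnot := hlt ω hω
    rw [inter_singleton_of_notMem hωA] at hnot
    exact hnot.not_ge (mul_nonneg hodds (mea_nonneg hw _))
  · refine (stableFor_condMea_iff_forall_inter ht1 hA).2 ⟨hne, fun E ⟨ω, hω⟩ hE ↦ ?_⟩
    have hle : mea w ((A ∩ E) \ X) ≤ mea w (A \ X) := mea_mono_s8 hw (by grind)
    obtain hzero | ⟨hXA, hdom⟩ := hX
    · have hE_sdiff : mea w ((A ∩ E) \ X) = 0 := (hle.trans_eq hzero).antisymm (mea_nonneg hw _)
      have hsplit := mea_inter_add_mea_sdiff w (A ∩ E) X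
      rw [hE_sdiff, mul_zero]
      linarith
    · calc t / (1 - t) * mea w ((A ∩ E) \ X) ≤ t / (1 - t) * mea w (A \ X) := by gcongr
        _ < mea w {ω} := hdom ω (mem_of_mem_inter_left hω)
        _ ≤ mea w (A ∩ E ∩ X) := mea_mono_s8 hw (by grind)

theorem stableFor_condMea_insert_singleton_iff (ht0 : 0 ≤ t) (ht1 : t < 1) (hw : ∀ ω, 0 ≤ w ω)
    (hω : ω ∉ X) (hA : 0 < mea w (insert ω X)) :
    StableFor (condMea w (insert ω X)) t {ω} ↔ t / (1 - t) * mea w X < mea w {ω} := by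
  have hsdiff : insert ω X \ {ω} = X := by grind
  have hzero : mea w X = 0 → t / (1 - t) * mea w X < mea w {ω} := fun h ↦ by
    rwa [mea_insert w hω, h, add_zero, ← mul_zero (t / (1 - t)), ← h] at hA
  simp only [stableFor_condMea_iff ht0 ht1 hw hA, hsdiff, singleton_nonempty, true_and,
    singleton_subset_iff, mem_insert_self, mem_singleton, forall_eq]
  exact or_iff_right_of_imp hzero

theorem StableFor.mem_of_mea_sdiff_singleton_le (ht0 : 0 ≤ t) (ht1 : t < 1) (hw : ∀ ω, 0 ≤ w ω)
    (hωA : ω ∈ A) (hω : 0 < mea w {ω}) (hle : mea w (A \ {ω}) ≤ t / (1 - t) * mea w {ω})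
    (hY : StableFor (condMea w A) t Y) : ω ∈ Y := by
  by_contra hωY
  have hodds : 0 ≤ t / (1 - t) := div_nonneg ht0 (sub_nonneg.2 ht1.le)
  have hA : 0 < mea w A := hω.trans_le (mea_mono_s8 hw (singleton_subset_iff.2 hωA))
  have hω_le : mea w {ω} ≤ mea w (A \ Y) := mea_mono_s8 hw (by grind)
  obtain ⟨⟨y, hy⟩, hzero | ⟨hYA, hdom⟩⟩ := (stableFor_condMea_iff ht0 ht1 hw hA).1 hY
  · exact (hω.trans_le hω_le).ne' hzero
  · refine lt_irrefl (mea w {y}) ?_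
    calc mea w {y} ≤ mea w (A \ {ω}) := mea_mono_s8 hw (by grind)
      _ ≤ t / (1 - t) * mea w {ω} := hle
      _ ≤ t / (1 - t) * mea w (A \ Y) := mul_le_mul_of_nonneg_left hω_le hodds
      _ < mea w {y} := hdom y hy

theorem isLeastStable_condMea_insert_singleton (ht0 : 1 / 2 ≤ t) (ht1 : t < 1)
    (hw : ∀ ω, 0 ≤ w ω) (hω : ω ∉ X) (hlt : t / (1 - t) * mea w X < mea w {ω}) :
    IsLeastStable (condMea w (insert ω X)) t {ω} := by
  have ht : 0 ≤ t := by linarith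
  have hodds : 1 ≤ t / (1 - t) := by rw [one_le_div (sub_pos.2 ht1)]; linarith
  have hX : 0 ≤ mea w X := mea_nonneg hw X
  have hpos : 0 < mea w {ω} :=
    (mul_nonneg (zero_le_one.trans hodds) hX).trans_lt hlt
  have hA : 0 < mea w (insert ω X) := mea_insert w hω ▸ add_pos_of_pos_of_nonneg hpos hX
  refine ⟨(stableFor_condMea_insert_singleton_iff ht ht1 hw hω hA).2 hlt,
    fun Y hY ↦ singleton_subset_iff.2 ?_⟩
  refine hY.mem_of_mea_sdiff_singleton_le ht ht1 hw (mem_insert_self ω X) hpos ?_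
  calc mea w (insert ω X \ {ω}) ≤ mea w X := mea_mono_s8 hw (by grind)
    _ ≤ t / (1 - t) * mea w X := le_mul_of_one_le_left hX hodds
    _ ≤ mea w {ω} := hlt.le
    _ ≤ t / (1 - t) * mea w {ω} := le_mul_of_one_le_left hpos.le hodds

theorem IsLeastStable.eq_singleton {m : Finset Ω → ℝ} (h : IsLeastStable m t X) (hX : X ⊆ {ω}) :
    X = {ω} :=
  (subset_singleton_iff.1 hX).resolve_left h.1.1.ne_empty

theorem ent_empty_iff : Ent w t A ∅ ↔ mea w A = 0 :=
  or_iff_left fun ⟨_, hS, hleast⟩ ↦ hleast.1.1.ne_empty (subset_empty.1 hS)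

theorem mul_mea_lt_mea_singleton_iff (ht0 : 1 / 2 ≤ t) (ht1 : t < 1) (hw : ∀ ω, 0 ≤ w ω)
    (hω : ω ∉ X) :
    t / (1 - t) * mea w X < mea w {ω} ↔
      ¬ Ent w t (insert ω X) ∅ ∧ Ent w t (insert ω X) {ω} := by
  constructor
  · intro hlt
    have hX : 0 ≤ t / (1 - t) * mea w X :=
      mul_nonneg (div_nonneg (by linarith) (by linarith)) (mea_nonneg hw X)
    have hA : 0 < mea w (insert ω X) :=
      (hX.trans_lt hlt).trans_le (mea_mono_s8 hw (by grind))
    exact ⟨ent_empty_iff.not.2 hA.ne', Or.inr ⟨{ω}, Subset.rfl,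
      isLeastStable_condMea_insert_singleton ht0 ht1 hw hω hlt⟩⟩
  · rintro ⟨hne, hEnt⟩
    rw [ent_empty_iff] at hne
    obtain ⟨S, hS, hleast⟩ := hEnt.resolve_left hne
    obtain rfl := hleast.eq_singleton hS
    exact (stableFor_condMea_insert_singleton_iff (by linarith) ht1 hw hω
      ((mea_nonneg hw _).lt_of_ne' hne)).1 hleast.1

end Stability

theorem stableFor_condMea_congr [DecidableEq Ω] {t : ℝ} (ht0 : 0 ≤ t) (ht1 : t < 1)
    {μ ρ : Ω → ℝ} (hμ : ∀ ω, 0 ≤ μ ω) (hρ : ∀ ω, 0 ≤ ρ ω)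
    (hsupp : ∀ X : Finset Ω, mea μ X = 0 ↔ mea ρ X = 0)
    (hodds : ∀ (ω : Ω) (X : Finset Ω), ω ∉ X →
      (t / (1 - t) * mea μ X < mea μ {ω} ↔ t / (1 - t) * mea ρ X < mea ρ {ω}))
    {A : Finset Ω} (hA : mea μ A ≠ 0) (X : Finset Ω) :
    StableFor (condMea μ A) t X ↔ StableFor (condMea ρ A) t X := by
  have hμA : 0 < mea μ A := (mea_nonneg hμ A).lt_of_ne' hA
  have hρA : 0 < mea ρ A := (mea_nonneg hρ A).lt_of_ne' ((hsupp A).not.1 hA)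
  rw [stableFor_condMea_iff ht0 ht1 hμ hμA, stableFor_condMea_iff ht0 ht1 hρ hρA]
  exact and_congr_right fun _ ↦ or_congr (hsupp _) <| and_congr_right fun _ ↦
    forall₂_congr fun ω hω ↦ hodds ω _ fun h ↦ (mem_sdiff.1 h).2 hω

theorem stmt8_general [DecidableEq Ω] {t : ℝ} (ht0 : 1 / 2 ≤ t) (ht1 : t < 1)
    {μ ρ : Ω → ℝ} (hμ : ∀ ω, 0 ≤ μ ω) (hρ : ∀ ω, 0 ≤ ρ ω) :
    (∀ A B : Finset Ω, Ent μ t A B ↔ Ent ρ t A B) ↔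
      ((∀ X : Finset Ω, mea μ X = 0 ↔ mea ρ X = 0) ∧
        (∀ (ω : Ω) (X : Finset Ω), ω ∉ X →
          (t / (1 - t) * mea μ X < mea μ {ω} ↔ t / (1 - t) * mea ρ X < mea ρ {ω}))) := by
  refine ⟨fun hEnt ↦ ⟨fun X ↦ ?_, fun ω X hω ↦ ?_⟩, fun ⟨hsupp, hodds⟩ A B ↦ ?_⟩
  · rw [← ent_empty_iff (t := t), ← ent_empty_iff (t := t), hEnt]
  · simp only [mul_mea_lt_mea_singleton_iff ht0 ht1 hμ hω,
      mul_mea_lt_mea_singleton_iff ht0 ht1 hρ hω, hEnt]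
  · by_cases hA : mea μ A = 0
    · exact iff_of_true (Or.inl hA) (Or.inl ((hsupp A).1 hA))
    · have hstable := stableFor_condMea_congr (by linarith) ht1 hμ hρ hsupp hodds hA
      simp only [Ent, IsLeastStable, hsupp A, hstable]

/-- Observation `GEOMETRY`: two probability measures generate the same
stability-based consequence relation iff they have the same support and lie in the same
region of the fixed-odds hyperplane arrangement. -/
theorem stmt8 [Fintype Ω] [DecidableEq Ω] [Nonempty Ω]
    (t : ℝ) (ht0 : 1 / 2 ≤ t) (ht1 : t < 1)
    (μ ρ : Ω → ℝ) (hμ : IsProbWeight μ) (hρ : IsProbWeight ρ) :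
    (∀ A B : Finset Ω, Ent μ t A B ↔ Ent ρ t A B) ↔
      ((∀ X : Finset Ω, mea μ X = 0 ↔ mea ρ X = 0) ∧
        (∀ (ω : Ω) (X : Finset Ω), ω ∉ X →
          (t / (1 - t) * mea μ X < mea μ {ω} ↔ t / (1 - t) * mea ρ X < mea ρ {ω}))) := by
  exact stmt8_general ht0 ht1 hμ.1 hρ.1
end

section
/- Let Ω be a finite nonempty set and σ a selection function on Ω satisfying the property (wO): for every n ≥ 1 and all X_1, …, X_n ⊆ Ω, if X_i\X_j ⊆ σ(X_i) for all i ≠ j, then σ(⋃_{i≤n} X_i) ⊆ ⋃_{i≤n} σ(X_i). Then σ satisfies (S4ₙ) for every n ≥ 1: if σ(A∪X_i) = X_i for all i ≤ n, then σ(A∪⋃_{i≤n}X_i) ⊆ ⋃_{i≤n}X_i. -/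
open Finset

variable {Ω : Type*}

section Lattice

variable {α ι : Type*}

theorem finset_sup_const_sup [SemilatticeSup α] [OrderBot α] {s : Finset ι} (hs : s.Nonempty)
    (a : α) (x : ι → α) : (s.sup fun i => a ⊔ x i) = a ⊔ s.sup x :=
  sup_sup.trans (congrArg (· ⊔ s.sup x) (sup_const hs a))

variable [GeneralizedCoheytingAlgebra α]

theorem sup_sdiff_sup_le (a b c : α) : (a ⊔ b) \ (a ⊔ c) ≤ b :=
  sdiff_le_iff.2 (sup_le_sup_right le_sup_left b)

/-- The property (wO) of a selection function, for families indexed by one fixed finite type `ι`;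
the paper's (wO) asks for it with `ι = Fin n` for every `n ≥ 1`. Sets are elements of a lattice with
difference, so that `Finset Ω` and `Set Ω` are both covered. -/
def WeakOr (ι : Type*) [Fintype ι] (σ : α → α) : Prop :=
  ∀ x : ι → α, (∀ i j, i ≠ j → x i \ x j ≤ σ (x i)) → σ (univ.sup x) ≤ univ.sup fun i => σ (x i)

theorem stmt14_general [Fintype ι] [Nonempty ι] {σ : α → α} (hσ : WeakOr ι σ) {a : α} {x : ι → α}
    (hx : ∀ i, σ (a ⊔ x i) = x i) : σ (a ⊔ univ.sup x) ≤ univ.sup x := by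
  have sdiff_le (i j : ι) : (a ⊔ x i) \ (a ⊔ x j) ≤ σ (a ⊔ x i) :=
    (sup_sdiff_sup_le a (x i) (x j)).trans_eq (hx i).symm
  calc
    σ (a ⊔ univ.sup x) = σ (univ.sup fun i => a ⊔ x i) := by
      rw [finset_sup_const_sup univ_nonempty]
    _ ≤ univ.sup fun i => σ (a ⊔ x i) := hσ _ fun i j _ => sdiff_le i j
    _ = univ.sup x := by simp only [hx]

end Lattice

/-- Observation `weakOr2`: the property (wO) entails the axiom (S4ₙ)
for every `n`. -/
theorem stmt14 [Fintype Ω] [DecidableEq Ω] [Nonempty Ω]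
    (σ : Finset Ω → Finset Ω)
    (hwO : ∀ n : ℕ, ∀ X : Fin (n + 1) → Finset Ω,
      (∀ i j, i ≠ j → X i \ X j ⊆ σ (X i)) →
      σ (univ.biUnion X) ⊆ univ.biUnion fun i => σ (X i)) :
    SelA4 σ := by
  simp only [SelA4, ← sup_eq_biUnion] at hwO ⊢
  exact fun n _ _ => stmt14_general (hwO n)
end

section
/- For all real numbers a, b with 1 ≤ a < b, there exist natural numbers m ≥ 2 and n > 1 such that a < n^(1/(m−1)) < b. Equivalently, the set of positive real solutions of the equations x^m − n·x = 0 with m, n ranging over the natural numbers is dense in the interval [1, ∞). -/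
/-!
Since `n ^ (1 / k)` lies in `(a, b)` exactly when `n` lies in `(a ^ k, b ^ k)`, it suffices to find
`k` for which the latter interval is longer than `1`. By Bernoulli's inequality its length is at
least `k * a ^ (k - 1) * (b - a) ≥ k * (b - a)`, so every `k > 1 / (b - a)` will do.
-/

open Set

theorem natCast_mul_sub_le_pow_sub_pow {R : Type*} [CommRing R] [LinearOrder R]
    [IsStrictOrderedRing R] {a b : R} (ha : 1 ≤ a) (hab : a ≤ b) (k : ℕ) :
    k * (b - a) ≤ b ^ k - a ^ k := by
  have bernoulli : a ^ k + k * a ^ (k - 1) * (b - a) ≤ (a + (b - a)) ^ k :=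
    pow_add_mul_le_add_pow (by linarith) (by linarith) k
  have hk : (k : R) ≤ k * a ^ (k - 1) :=
    le_mul_of_one_le_right k.cast_nonneg (one_le_pow₀ ha)
  calc k * (b - a) ≤ k * a ^ (k - 1) * (b - a) :=
        mul_le_mul_of_nonneg_right hk (sub_nonneg.2 hab)
    _ ≤ b ^ k - a ^ k := by
        rw [add_sub_cancel] at bernoulli
        exact le_sub_iff_add_le'.2 bernoulli

theorem exists_natCast_mem_Ioo_of_add_one_lt {R : Type*} [Semiring R] [LinearOrder R]
    [IsStrictOrderedRing R] [FloorSemiring R] {x y : R} (hx : 0 ≤ x) (hxy : x + 1 < y) :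
    ∃ n : ℕ, (n : R) ∈ Ioo x y := by
  refine ⟨⌊x⌋₊ + 1, ?_, ?_⟩ <;> rw [Nat.cast_add_one]
  · exact Nat.lt_floor_add_one x
  · exact (add_le_add_left (Nat.floor_le hx) 1).trans_lt hxy

theorem exists_natCast_mem_Ioo_pow {R : Type*} [CommRing R] [LinearOrder R]
    [IsStrictOrderedRing R] [FloorSemiring R] {a b : R} {k : ℕ} (ha : 1 ≤ a)
    (hk : 1 < k * (b - a)) : ∃ n : ℕ, (n : R) ∈ Ioo (a ^ k) (b ^ k) := by
  have hab : a < b := sub_pos.1 (pos_of_mul_pos_right (zero_lt_one.trans hk) k.cast_nonneg)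
  have gap : 1 < b ^ k - a ^ k := hk.trans_le (natCast_mul_sub_le_pow_sub_pow ha hab.le k)
  exact exists_natCast_mem_Ioo_of_add_one_lt (pow_nonneg (zero_le_one.trans ha) k)
    (lt_sub_iff_add_lt'.1 gap)

theorem rpow_inv_natCast_mem_Ioo_iff {a b x : ℝ} {k : ℕ} (ha : 0 ≤ a) (hb : 0 ≤ b) (hx : 0 ≤ x)
    (hk : 0 < k) : x ^ (k⁻¹ : ℝ) ∈ Ioo a b ↔ x ∈ Ioo (a ^ k) (b ^ k) := by
  have hk' : (0 : ℝ) < k := Nat.cast_pos.2 hk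
  rw [mem_Ioo, mem_Ioo, Real.lt_rpow_inv_iff_of_pos ha hx hk',
    Real.rpow_inv_lt_iff_of_pos hx hb hk', Real.rpow_natCast, Real.rpow_natCast]

/-- density lemma: for all reals `1 ≤ a < b` there are naturals `m ≥ 2`
and `n > 1` with `a < n ^ (1 / (m - 1)) < b`; i.e., the positive solutions of the equations
`x ^ m - n * x = 0` are dense in `[1, ∞)`. -/
theorem stmt16 : ∀ a b : ℝ, 1 ≤ a → a < b →
    ∃ m n : ℕ, 2 ≤ m ∧ 1 < n ∧
      a < (n : ℝ) ^ ((1 : ℝ) / ((m : ℝ) - 1)) ∧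
      (n : ℝ) ^ ((1 : ℝ) / ((m : ℝ) - 1)) < b := by
  intro a b ha hab
  have ha₀ : 0 ≤ a := zero_le_one.trans ha
  obtain ⟨k, hk⟩ := exists_nat_gt (b - a)⁻¹
  have hk₀ : 0 < k := Nat.cast_pos.1 ((inv_pos.2 (sub_pos.2 hab)).trans hk)
  obtain ⟨n, hn⟩ := exists_natCast_mem_Ioo_pow ha
    ((inv_lt_iff_one_lt_mul₀ (sub_pos.2 hab)).1 hk)
  have hn₁ : 1 < n := Nat.one_lt_cast.1 ((one_le_pow₀ ha).trans_lt hn.1)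
  have exponent_eq : (1 : ℝ) / (((k + 1 : ℕ) : ℝ) - 1) = (k : ℝ)⁻¹ := by
    rw [Nat.cast_add_one, add_sub_cancel_right, one_div]
  refine ⟨k + 1, n, Nat.succ_le_succ hk₀, hn₁, ?_⟩
  rw [exponent_eq]
  exact (rpow_inv_natCast_mem_Ioo_iff ha₀ (ha₀.trans hab.le) n.cast_nonneg hk₀).2 hn
end

section
/- Let Ω be a finite nonempty set, σ a selection function on Ω, t ∈ [1/2, 1), and μ a probability measure on Ω that represents σ for threshold t. Then there exists a rational number t' ∈ [1/2, 1) such that μ represents σ for threshold t'. In particular, every representable selection function on a finite set is t-representable for some rational threshold t. -/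
open Finset

variable {Ω : Type*}

/-!
Representing `σ` at threshold `t` depends only on which of the inequalities
`t < μ_A(X ∩ E) / μ_A(E)` hold. On a finite set there are only finitely many such quotients, so
for `s > t` close enough to `t` none of them lies in `(t, s]`. Passing from `t` to such an `s`
changes no inequality, and `s` can be taken rational.
-/

open scoped Topology

theorem eventually_nhdsGT_lt_iff {α : Type*} [TopologicalSpace α] [LinearOrder α]
    [ClosedIciTopology α] (t a : α) : ∀ᶠ s in 𝓝[>] t, s < a ↔ t < a := by
  rcases lt_or_ge t a with hta | hat
  · filter_upwards [eventually_nhdsWithin_of_eventually_nhds (eventually_lt_nhds hta)] with s hsa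
    exact iff_of_true hsa hta
  · filter_upwards [self_mem_nhdsWithin] with s hts
    exact iff_of_false (hat.trans_lt hts).not_gt hat.not_gt

section Threshold

variable [Finite Ω] [DecidableEq Ω]

theorem eventually_nhdsGT_stableFor_iff (m : Finset Ω → ℝ) (t : ℝ) :
    ∀ᶠ s in 𝓝[>] t, ∀ X, StableFor m s X ↔ StableFor m t X := by
  have hquot : ∀ᶠ s in 𝓝[>] t, ∀ X E, s < m (X ∩ E) / m E ↔ t < m (X ∩ E) / m E :=
    Filter.eventually_all.2 fun _ ↦ Filter.eventually_all.2 fun _ ↦ eventually_nhdsGT_lt_iff t _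
  filter_upwards [hquot] with s hs X
  simp only [StableFor, hs]

theorem eventually_nhdsGT_isLeastStable_iff (m : Finset Ω → ℝ) (t : ℝ) :
    ∀ᶠ s in 𝓝[>] t, ∀ S, IsLeastStable m s S ↔ IsLeastStable m t S := by
  filter_upwards [eventually_nhdsGT_stableFor_iff m t] with s hs S
  simp only [IsLeastStable, hs]

theorem eventually_nhdsGT_representsAt_iff (w : Ω → ℝ) (t : ℝ) :
    ∀ᶠ s in 𝓝[>] t, ∀ σ, RepresentsAt w s σ ↔ RepresentsAt w t σ := by
  have hcond : ∀ᶠ s in 𝓝[>] t, ∀ E S,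
      IsLeastStable (condMea w E) s S ↔ IsLeastStable (condMea w E) t S :=
    Filter.eventually_all.2 fun E ↦ eventually_nhdsGT_isLeastStable_iff (condMea w E) t
  filter_upwards [hcond] with s hs σ
  simp only [RepresentsAt, hs]

theorem stmt17_general (σ : Finset Ω → Finset Ω) {t u : ℝ} (htu : t < u) (w : Ω → ℝ)
    (hrep : RepresentsAt w t σ) :
    ∃ t' : ℚ, t < (t' : ℝ) ∧ (t' : ℝ) < u ∧ RepresentsAt w (t' : ℝ) σ := by
  obtain ⟨v, htv, hv⟩ :=
    (mem_nhdsGT_iff_exists_Ioo_subset' htu).1 (eventually_nhdsGT_representsAt_iff w t)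
  obtain ⟨q, htq, hq⟩ := exists_rat_btwn (lt_min htu htv)
  obtain ⟨hqu, hqv⟩ := lt_min_iff.1 hq
  exact ⟨q, htq, hqu, (hv ⟨htq, hqv⟩ σ).2 hrep⟩

end Threshold

/-- Proposition `QREP`: if `μ` represents `σ` for some threshold
`t ∈ [1/2, 1)`, then `μ` represents `σ` for some rational threshold `t' ∈ [1/2, 1)`;
hence every representable selection function is representable at a rational threshold. -/
theorem stmt17 [Fintype Ω] [DecidableEq Ω] [Nonempty Ω]
    (σ : Finset Ω → Finset Ω)
    (t : ℝ) (ht0 : 1 / 2 ≤ t) (ht1 : t < 1)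
    (w : Ω → ℝ) (hw : IsProbWeight w)
    (hrep : RepresentsAt w t σ) :
    ∃ t' : ℚ, 1 / 2 ≤ (t' : ℝ) ∧ (t' : ℝ) < 1 ∧ RepresentsAt w (t' : ℝ) σ := by
  obtain ⟨q, htq, hq1, hq⟩ := stmt17_general σ ht1 w hrep
  exact ⟨q, ht0.trans htq.le, hq1, hq⟩
end
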